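/- Fix a dimension d ≥ 1. There exists a constant C = C(d) > 0 such that for all compactly supported smooth functions g, h : ℝ^d → ℂ, all k ∈ ℝ^d with k ≠ 0, and all ε > 0, one has | ∫_{ℝ^d} conj(h(v)) · g(v) / (ε + i k·v) dv | ≤ (C/|k|) · ( (‖h‖_{L²} + ‖∇h‖_{L²}) ‖g‖_{L²} + ‖h‖_{L²} ‖∇g‖_{L²} ). -/

import Mathlib

open MeasureTheory
open scoped ENNReal RealInnerProductSpace

namespace Resolv

/-- scaling by `t` in the direction `k` -/
noncomputable def Lt {d : ℕ} (k : EuclideanSpace ℝ (Fin d)) (t : ℝ) :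
    EuclideanSpace ℝ (Fin d) →ₗ[ℝ] EuclideanSpace ℝ (Fin d) :=
  LinearMap.transvection (innerₛₗ ℝ k) (((t - 1) / ‖k‖ ^ 2) • k)

lemma Lt_apply {d : ℕ} (k : EuclideanSpace ℝ (Fin d)) (t : ℝ) (v : EuclideanSpace ℝ (Fin d)) :
    Lt k t v = v + ((t - 1) * (⟪k, v⟫ / ‖k‖ ^ 2)) • k := by
  simp only [Lt, LinearMap.transvection.apply, innerₛₗ_apply_apply, smul_smul]
  congr 2
  ring

lemma Lt_det {d : ℕ} (k : EuclideanSpace ℝ (Fin d)) (hk : k ≠ 0) (t : ℝ) :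
    LinearMap.det (Lt k t) = t := by
  have : ‖k‖ ≠ 0 := norm_ne_zero_iff.mpr hk
  simp only [Lt, LinearMap.transvection.det, innerₛₗ_apply_apply, inner_smul_right,
    real_inner_self_eq_norm_sq]
  field_simp
  ring

lemma inner_Lt_neg {d : ℕ} (k : EuclideanSpace ℝ (Fin d)) (hk : k ≠ 0)
    (v : EuclideanSpace ℝ (Fin d)) : ⟪k, Lt k (-1) v⟫ = - ⟪k, v⟫ := by
  have : ‖k‖ ≠ 0 := norm_ne_zero_iff.mpr hk
  rw [Lt_apply, inner_add_right, inner_smul_right, real_inner_self_eq_norm_sq]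
  field_simp
  ring

lemma Lt_one {d : ℕ} (k v : EuclideanSpace ℝ (Fin d)) : Lt k 1 v = v := by
  simp [Lt_apply]

lemma Lt_meas {d : ℕ} (k : EuclideanSpace ℝ (Fin d)) (t : ℝ) : Measurable (Lt k t) :=
  (LinearMap.continuous_of_finiteDimensional _).measurable

lemma lintegral_Lt {d : ℕ} (k : EuclideanSpace ℝ (Fin d)) (hk : k ≠ 0) (t : ℝ) (ht : t ≠ 0)
    (u : EuclideanSpace ℝ (Fin d) → ℝ≥0∞) (hu : Measurable u) :
    ∫⁻ v, u (Lt k t v) = ENNReal.ofReal |t⁻¹| * ∫⁻ v, u v := by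
  rw [← lintegral_map hu (Lt_meas k t),
    Measure.map_linearMap_addHaar_eq_smul_addHaar volume (by rwa [Lt_det k hk]),
    Lt_det k hk, lintegral_smul_measure, smul_eq_mul]

lemma mp_refl {d : ℕ} (k : EuclideanSpace ℝ (Fin d)) (hk : k ≠ 0) :
    MeasurePreserving (Lt k (-1)) := by
  refine ⟨Lt_meas k _, ?_⟩
  rw [Measure.map_linearMap_addHaar_eq_smul_addHaar volume (by rw [Lt_det k hk]; norm_num),
    Lt_det k hk]
  simp

/-- `L²` norm of a nonnegative function -/
noncomputable def n2 {α : Type*} [MeasureSpace α] (u : α → ℝ≥0∞) : ℝ≥0∞ :=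
  (∫⁻ v, u v ^ (2:ℝ)) ^ (1 / (2:ℝ))

lemma holder2 {α : Type*} [MeasureSpace α] (u w : α → ℝ≥0∞) (hu : Measurable u)
    (hw : Measurable w) : ∫⁻ v, u v * w v ≤ n2 u * n2 w :=
  ENNReal.lintegral_mul_le_Lp_mul_Lq volume Real.HolderConjugate.two_two
    hu.aemeasurable hw.aemeasurable

lemma eLp2 {d : ℕ} {F : Type*} [NormedAddCommGroup F] (f : EuclideanSpace ℝ (Fin d) → F) :
    eLpNorm f 2 volume = n2 (fun v => ‖f v‖ₑ) := by
  rw [eLpNorm_eq_lintegral_rpow_enorm_toReal (by norm_num) (by norm_num)]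
  simp [n2]

lemma n2_Lt {d : ℕ} (k : EuclideanSpace ℝ (Fin d)) (hk : k ≠ 0) (t : ℝ) (ht : t ≠ 0)
    (u : EuclideanSpace ℝ (Fin d) → ℝ≥0∞) (hu : Measurable u) :
    n2 (fun v => u (Lt k t v)) = ENNReal.ofReal (|t| ^ (-(1/2) : ℝ)) * n2 u := by
  unfold n2
  rw [lintegral_Lt k hk t ht (fun v => u v ^ (2:ℝ)) (hu.pow_const _),
    ENNReal.mul_rpow_of_nonneg _ _ (by norm_num),
    ENNReal.ofReal_rpow_of_nonneg (abs_nonneg _) (by norm_num), abs_inv,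
    Real.inv_rpow (abs_nonneg _), Real.rpow_neg (abs_nonneg _)]

lemma int_weight :
    ∫⁻ t in Set.Icc (-1:ℝ) 1, ENNReal.ofReal (|t| ^ (-(1/2) : ℝ)) ≤ 4 := by
  have h1 : ∫⁻ t in Set.Ioc (0:ℝ) 1, ENNReal.ofReal (|t| ^ (-(1/2) : ℝ)) = 2 := by
    have hi : IntervalIntegrable (fun t : ℝ => t ^ (-(1/2) : ℝ)) volume 0 1 :=
      intervalIntegral.intervalIntegrable_rpow' (by norm_num)
    have := integral_rpow (a := 0) (b := 1) (r := -(1/2)) (Or.inl (by norm_num))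
    rw [intervalIntegral.integral_of_le (by norm_num)] at this
    have h2 := ofReal_integral_eq_lintegral_ofReal
      ((intervalIntegrable_iff_integrableOn_Ioc_of_le (by norm_num)).1 hi)
      (by
        filter_upwards [self_mem_ae_restrict measurableSet_Ioc] with t ht
        exact Real.rpow_nonneg ht.1.le _)
    rw [this] at h2
    rw [setLIntegral_congr_fun measurableSet_Ioc
      (g := fun t => ENNReal.ofReal (t ^ (-(1/2) : ℝ))) (fun t ht => by
        simp only [abs_of_pos ht.1]), ← h2]
    norm_num
  have h1' : ∫⁻ t in Set.Icc (0:ℝ) 1, ENNReal.ofReal (|t| ^ (-(1/2) : ℝ)) = 2 := by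
    rw [← h1]; exact setLIntegral_congr Ioc_ae_eq_Icc.symm
  have h3 : ∫⁻ t in Set.Icc (-1:ℝ) 0, ENNReal.ofReal (|t| ^ (-(1/2) : ℝ)) = 2 := by
    rw [← h1']
    have := (Measure.measurePreserving_neg (volume : Measure ℝ)).setLIntegral_comp_preimage
      (s := Set.Icc (0:ℝ) 1) measurableSet_Icc
      (f := fun t => ENNReal.ofReal (|t| ^ (-(1/2) : ℝ))) (by fun_prop)
    rw [← this]
    simp
  have hs : Set.Icc (-1:ℝ) 1 ⊆ Set.Icc (-1) 0 ∪ Set.Icc 0 1 := by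
    intro t ht
    rcases le_total t 0 with h | h
    · exact Or.inl ⟨ht.1, h⟩
    · exact Or.inr ⟨h, ht.2⟩
  calc _ ≤ _ := lintegral_mono_set hs
    _ ≤ _ := lintegral_union_le _ _ _
    _ = 4 := by rw [h1', h3]; norm_num

lemma Lt_cont {d : ℕ} (k : EuclideanSpace ℝ (Fin d)) :
    Continuous (fun p : EuclideanSpace ℝ (Fin d) × ℝ => Lt k p.2 p.1) := by
  simp only [Lt_apply]
  fun_prop

lemma hardy_swap {d : ℕ} (k : EuclideanSpace ℝ (Fin d))
    (u w : EuclideanSpace ℝ (Fin d) → ℝ≥0∞) (hu : Measurable u) (hw : Measurable w) :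
    ∫⁻ v, (∫⁻ t in Set.Icc (-1:ℝ) 1, u (Lt k t v)) * w v =
      ∫⁻ t in Set.Icc (-1:ℝ) 1, ∫⁻ v, u (Lt k t v) * w v := by
  have hm : Measurable (fun p : EuclideanSpace ℝ (Fin d) × ℝ => u (Lt k p.2 p.1)) :=
    hu.comp (Lt_cont k).measurable
  have hm2 : Measurable (fun p : EuclideanSpace ℝ (Fin d) × ℝ =>
      u (Lt k p.2 p.1) * w p.1) := Measurable.mul hm (hw.comp measurable_fst)
  rw [← lintegral_lintegral_swap (μ := volume) (ν := volume.restrict (Set.Icc (-1:ℝ) 1))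
    (f := fun v t => u (Lt k t v) * w v) (by exact hm2.aemeasurable)]
  refine lintegral_congr fun v => ?_
  have h3 : Measurable (fun t : ℝ => u (Lt k t v)) :=
    Measurable.comp (g := fun p : EuclideanSpace ℝ (Fin d) × ℝ => u (Lt k p.2 p.1))
      (f := fun t : ℝ => (v, t)) hm measurable_prodMk_left
  rw [lintegral_mul_const _ h3]

/-- Hardy type inequality -/
lemma hardy {d : ℕ} (k : EuclideanSpace ℝ (Fin d)) (hk : k ≠ 0)
    (u w : EuclideanSpace ℝ (Fin d) → ℝ≥0∞) (hu : Measurable u) (hw : Measurable w) :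
    ∫⁻ v, (∫⁻ t in Set.Icc (-1:ℝ) 1, u (Lt k t v)) * w v ≤ 4 * (n2 u * n2 w) := by
  rw [hardy_swap k u w hu hw]
  have hne : ∀ᵐ t : ℝ, t ≠ 0 := by simp [ae_iff]
  have h1 : ∫⁻ t in Set.Icc (-1:ℝ) 1, ∫⁻ v, u (Lt k t v) * w v ≤
      ∫⁻ t in Set.Icc (-1:ℝ) 1, ENNReal.ofReal (|t| ^ (-(1/2) : ℝ)) * (n2 u * n2 w) := by
    apply lintegral_mono_ae
    filter_upwards [ae_restrict_of_ae hne] with t ht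
    rw [← mul_assoc, ← n2_Lt k hk t ht u hu]
    exact holder2 _ w (hu.comp (Lt_meas k t)) hw
  refine h1.trans ?_
  have h2 : Measurable (fun t : ℝ => ENNReal.ofReal (|t| ^ (-(1/2) : ℝ))) := by fun_prop
  rw [lintegral_mul_const _ h2]
  exact mul_le_mul_left int_weight _

lemma diff_bound {d : ℕ} (k : EuclideanSpace ℝ (Fin d)) (hk : k ≠ 0)
    (f : EuclideanSpace ℝ (Fin d) → ℂ) (hf : ContDiff ℝ 1 f) (v : EuclideanSpace ℝ (Fin d)) :
    ‖f v - f (Lt k (-1) v)‖ₑ ≤ ENNReal.ofReal (|⟪k, v⟫| / ‖k‖) *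
      ∫⁻ t in Set.Icc (-1:ℝ) 1, ‖fderiv ℝ f (Lt k t v)‖ₑ := by
  have hk' : ‖k‖ ≠ 0 := norm_ne_zero_iff.mpr hk
  have hd : ∀ t, HasDerivAt (fun t => f (Lt k t v))
      (fderiv ℝ f (Lt k t v) ((⟪k, v⟫ / ‖k‖ ^ 2) • k)) t := by
    intro t
    have h1 : HasDerivAt (fun t => Lt k t v) ((⟪k, v⟫ / ‖k‖ ^ 2) • k) t := by
      simp only [Lt_apply]
      have := ((((hasDerivAt_id t).sub_const 1).mul_const (⟪k, v⟫ / ‖k‖ ^ 2)).smul_const k).const_add v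
      simpa using this
    exact ((hf.differentiable (by norm_num) _).hasFDerivAt.comp_hasDerivAt t h1)
  have hc : ContDiff ℝ 1 (fun t => f (Lt k t v)) := by
    apply hf.comp
    simp only [Lt_apply]
    fun_prop
  have := enorm_sub_le_lintegral_deriv_of_contDiffOn_Icc (f := fun t => f (Lt k t v))
    (a := -1) (b := 1) hc.contDiffOn (by norm_num)
  simp only [Lt_one] at this
  refine this.trans ?_
  rw [← lintegral_const_mul']
  swap
  · exact ENNReal.ofReal_ne_top
  refine lintegral_mono fun t => ?_
  rw [(hd t).deriv, mul_comm]
  refine (ContinuousLinearMap.le_opENorm _ _).trans ?_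
  gcongr
  rw [← ofReal_norm, norm_smul, Real.norm_eq_abs, abs_div, abs_of_nonneg (sq_nonneg ‖k‖)]
  apply le_of_eq
  congr 1
  field_simp

lemma even_part {d : ℕ} (k : EuclideanSpace ℝ (Fin d)) (hk : k ≠ 0) (ε : ℝ) (hε : 0 < ε)
    (F : EuclideanSpace ℝ (Fin d) → ℂ) (hF : ContDiff ℝ 1 F) (hFc : HasCompactSupport F) :
    ‖∫ v, F v * ((ε / (ε ^ 2 + ⟪k, v⟫ ^ 2) : ℝ) : ℂ)‖ₑ ≤
      ENNReal.ofReal (2 / ‖k‖) * ∫⁻ v, ‖fderiv ℝ F v‖ₑ := by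
  have hk' : 0 < ‖k‖ := norm_pos_iff.mpr hk
  let A : EuclideanSpace ℝ (Fin d) → ℂ :=
    fun v => ((Real.arctan (⟪k, v⟫ / ε) / ‖k‖ ^ 2 : ℝ) : ℂ)
  have hAcd : ContDiff ℝ 1 A := by
    apply Complex.ofRealCLM.contDiff.comp
    apply ContDiff.div_const
    apply Real.contDiff_arctan.comp
    apply ContDiff.div_const
    exact contDiff_const.inner ℝ contDiff_id
  have hA : ∀ v, fderiv ℝ A v k = ((ε / (ε ^ 2 + ⟪k, v⟫ ^ 2) : ℝ) : ℂ) := by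
    intro v
    have h1 : HasDerivAt (fun t : ℝ => ⟪k, v + t • k⟫ / ε) (‖k‖ ^ 2 / ε) 0 := by
      simp only [inner_add_right, inner_smul_right, real_inner_self_eq_norm_sq]
      have := ((((hasDerivAt_id (0:ℝ)).mul_const (‖k‖ ^ 2)).const_add ⟪k, v⟫).div_const ε)
      simpa using this
    have h2 := ((h1.arctan).div_const (‖k‖ ^ 2)).ofReal_comp
    have h3 : HasLineDerivAt ℝ A _ v k := h2
    have h4 := ((hAcd.differentiable (by norm_num) v).hasFDerivAt.hasLineDerivAt k)
    rw [← h4.lineDeriv, h3.lineDeriv]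
    congr 1
    simp only [zero_smul, add_zero]
    have : ε ^ 2 + ⟪k, v⟫ ^ 2 ≠ 0 := by positivity
    field_simp
  have hFd : Continuous (fun v => fderiv ℝ F v k) :=
    (hF.continuous_fderiv (by norm_num)).clm_apply continuous_const
  have hAd : Continuous (fun v => fderiv ℝ A v k) :=
    (hAcd.continuous_fderiv (by norm_num)).clm_apply continuous_const
  have hFdc : HasCompactSupport (fun v => fderiv ℝ F v k) := hFc.fderiv_apply ℝ k
  have key := integral_mul_fderiv_eq_neg_fderiv_mul_of_integrable (μ := volume)
    (f := F) (g := A) (v := k)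
    ((hFd.mul hAcd.continuous).integrable_of_hasCompactSupport hFdc.mul_right)
    ((hF.continuous.mul hAd).integrable_of_hasCompactSupport hFc.mul_right)
    ((hF.continuous.mul hAcd.continuous).integrable_of_hasCompactSupport hFc.mul_right)
    (fun x _ => hF.differentiable (by norm_num) x) (fun x _ => hAcd.differentiable (by norm_num) x)
  simp only [hA] at key
  rw [key, enorm_neg]
  refine (enorm_integral_le_lintegral_enorm _).trans ?_
  rw [← lintegral_const_mul' _ _ ENNReal.ofReal_ne_top]
  refine lintegral_mono fun v => ?_
  have hAb : ‖A v‖ ≤ 2 / ‖k‖ ^ 2 := by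
    simp only [A, Complex.norm_real, Real.norm_eq_abs, abs_div, abs_of_nonneg (sq_nonneg ‖k‖)]
    gcongr
    rw [abs_le]
    have := Real.arctan_lt_pi_div_two (⟪k, v⟫ / ε)
    have := Real.neg_pi_div_two_lt_arctan (⟪k, v⟫ / ε)
    have := Real.pi_le_four
    constructor <;> linarith
  have : ‖fderiv ℝ F v k * A v‖ ≤ 2 / ‖k‖ * ‖fderiv ℝ F v‖ := by
    rw [norm_mul]
    calc _ ≤ (‖fderiv ℝ F v‖ * ‖k‖) * (2 / ‖k‖ ^ 2) := by
          gcongr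
          exact ContinuousLinearMap.le_opNorm _ _
      _ = _ := by field_simp
  rw [← ofReal_norm, ← ofReal_norm, ← ENNReal.ofReal_mul (by positivity)]
  exact ENNReal.ofReal_le_ofReal this

lemma odd_part {d : ℕ} (k : EuclideanSpace ℝ (Fin d)) (hk : k ≠ 0) (ε : ℝ) (hε : 0 < ε)
    (F : EuclideanSpace ℝ (Fin d) → ℂ) (hF : Continuous F) (hFc : HasCompactSupport F) :
    2 * ‖∫ v, F v * ((⟪k, v⟫ / (ε ^ 2 + ⟪k, v⟫ ^ 2) : ℝ) : ℂ)‖ₑ ≤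
      ∫⁻ v, ‖F v - F (Lt k (-1) v)‖ₑ * ENNReal.ofReal (|⟪k, v⟫| / (ε ^ 2 + ⟪k, v⟫ ^ 2)) := by
  let K : EuclideanSpace ℝ (Fin d) → ℂ :=
    fun v => F v * ((⟪k, v⟫ / (ε ^ 2 + ⟪k, v⟫ ^ 2) : ℝ) : ℂ)
  have hpos : ∀ v : EuclideanSpace ℝ (Fin d), 0 < ε ^ 2 + ⟪k, v⟫ ^ 2 := fun v => by positivity
  have hKc : Continuous K := by
    apply hF.mul
    apply Complex.continuous_ofReal.comp
    apply Continuous.div (by fun_prop) (by fun_prop)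
    exact fun v => (hpos v).ne'
  have hK : Integrable K volume := hKc.integrable_of_hasCompactSupport hFc.mul_right
  have hmp := mp_refl k hk
  have hKR : Integrable (fun v => K (Lt k (-1) v)) volume :=
    hmp.integrable_comp_of_integrable hK
  have hKi : ∫ v, K (Lt k (-1) v) = ∫ v, K v := by
    have := integral_map (μ := volume) (φ := Lt k (-1)) hmp.measurable.aemeasurable (f := K)
      hKc.aestronglyMeasurable
    rw [← this, hmp.map_eq]
  have h2 : (2:ℂ) * ∫ v, K v = ∫ v, (K v + K (Lt k (-1) v)) := by
    rw [integral_add hK hKR, hKi]; ring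
  have h3 : 2 * ‖∫ v, K v‖ₑ = ‖∫ v, (K v + K (Lt k (-1) v))‖ₑ := by
    rw [← h2, enorm_mul]
    congr 1
    rw [← ofReal_norm]; simp
  change 2 * ‖∫ v, K v‖ₑ ≤ _
  rw [h3]
  refine (enorm_integral_le_lintegral_enorm _).trans (lintegral_mono fun v => ?_)
  have h4 : K v + K (Lt k (-1) v) =
      (F v - F (Lt k (-1) v)) * ((⟪k, v⟫ / (ε ^ 2 + ⟪k, v⟫ ^ 2) : ℝ) : ℂ) := by
    simp only [K, inner_Lt_neg k hk]
    push_cast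
    ring
  rw [h4, enorm_mul]
  gcongr
  rw [← ofReal_norm, Complex.norm_real, Real.norm_eq_abs, abs_div, abs_of_pos (hpos v)]

lemma odd_bound {d : ℕ} (k : EuclideanSpace ℝ (Fin d)) (hk : k ≠ 0) (ε : ℝ) (hε : 0 < ε)
    (g h : EuclideanSpace ℝ (Fin d) → ℂ) (hg : ContDiff ℝ 1 g) (hh : ContDiff ℝ 1 h) :
    ∫⁻ v, ‖(starRingEnd ℂ) (h v) * g v -
        (starRingEnd ℂ) (h (Lt k (-1) v)) * g (Lt k (-1) v)‖ₑ *
          ENNReal.ofReal (|⟪k, v⟫| / (ε ^ 2 + ⟪k, v⟫ ^ 2)) ≤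
      ENNReal.ofReal (1 / ‖k‖) *
        (4 * (n2 (fun v => ‖fderiv ℝ h v‖ₑ) * n2 (fun v => ‖g v‖ₑ)) +
          4 * (n2 (fun v => ‖fderiv ℝ g v‖ₑ) * n2 (fun v => ‖h v‖ₑ))) := by
  have hk' : 0 < ‖k‖ := norm_pos_iff.mpr hk
  have mg : Measurable (fun v => ‖g v‖ₑ) := hg.continuous.enorm.measurable
  have mh : Measurable (fun v => ‖h v‖ₑ) := hh.continuous.enorm.measurable
  have mdg : Measurable (fun v => ‖fderiv ℝ g v‖ₑ) :=
    (hg.continuous_fderiv (by norm_num)).enorm.measurable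
  have mdh : Measurable (fun v => ‖fderiv ℝ h v‖ₑ) :=
    (hh.continuous_fderiv (by norm_num)).enorm.measurable
  have mhR : Measurable (fun v => ‖h (Lt k (-1) v)‖ₑ) := mh.comp (Lt_meas k _)
  have nhR : n2 (fun v => ‖h (Lt k (-1) v)‖ₑ) = n2 (fun v => ‖h v‖ₑ) := by
    have := n2_Lt k hk (-1) (by norm_num) (fun v => ‖h v‖ₑ) mh
    simpa using this
  have b1 := hardy k hk _ _ mdh mg
  have b2 := hardy k hk _ _ mdg mhR
  rw [nhR] at b2
  have mN : Measurable (fun v => (∫⁻ t in Set.Icc (-1:ℝ) 1, ‖fderiv ℝ h (Lt k t v)‖ₑ)) := by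
    have hm : Measurable (fun p : EuclideanSpace ℝ (Fin d) × ℝ => ‖fderiv ℝ h (Lt k p.2 p.1)‖ₑ) :=
      mdh.comp (Lt_cont k).measurable
    exact hm.lintegral_prod_right'
  have mN' : Measurable (fun v =>
      (∫⁻ t in Set.Icc (-1:ℝ) 1, ‖fderiv ℝ h (Lt k t v)‖ₑ) * ‖g v‖ₑ) := Measurable.mul mN mg
  refine le_trans ?_ (mul_le_mul_right (add_le_add b1 b2) _)
  rw [← lintegral_add_left mN', ← lintegral_const_mul' _ _ ENNReal.ofReal_ne_top]
  refine lintegral_mono fun v => ?_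
  have e1 := diff_bound k hk h hh v
  have e2 := diff_bound k hk g hg v
  set a := ⟪k, v⟫
  set N1 := ∫⁻ t in Set.Icc (-1:ℝ) 1, ‖fderiv ℝ h (Lt k t v)‖ₑ
  set N2 := ∫⁻ t in Set.Icc (-1:ℝ) 1, ‖fderiv ℝ g (Lt k t v)‖ₑ
  set w := Lt k (-1) v
  have e3 : ‖(starRingEnd ℂ) (h v) * g v - (starRingEnd ℂ) (h w) * g w‖ₑ ≤
      ENNReal.ofReal (|a| / ‖k‖) * (N1 * ‖g v‖ₑ + N2 * ‖h w‖ₑ) := by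
    have : (starRingEnd ℂ) (h v) * g v - (starRingEnd ℂ) (h w) * g w =
      (starRingEnd ℂ) (h v - h w) * g v + (starRingEnd ℂ) (h w) * (g v - g w) := by
      rw [map_sub]; ring
    rw [this]
    refine (enorm_add_le _ _).trans ?_
    have hc : ∀ z : ℂ, ‖(starRingEnd ℂ) z‖ₑ = ‖z‖ₑ := fun z => by
      rw [← ofReal_norm, ← ofReal_norm, RCLike.norm_conj]
    rw [enorm_mul, enorm_mul, hc, hc, mul_add, ← mul_assoc, ← mul_assoc, mul_comm ‖h w‖ₑ]
    gcongr
  refine (mul_le_mul_left e3 _).trans ?_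
  have e4 : ENNReal.ofReal (|a| / ‖k‖) * ENNReal.ofReal (|a| / (ε ^ 2 + a ^ 2)) ≤
      ENNReal.ofReal (1 / ‖k‖) := by
    rw [← ENNReal.ofReal_mul (by positivity)]
    apply ENNReal.ofReal_le_ofReal
    have : |a| / ‖k‖ * (|a| / (ε ^ 2 + a ^ 2)) = (a ^ 2 / (ε ^ 2 + a ^ 2)) / ‖k‖ := by
      rw [div_mul_div_comm, ← abs_mul, ← sq, abs_of_nonneg (sq_nonneg a)]
      field_simp
    rw [this]
    gcongr
    rw [div_le_one (by positivity)]
    nlinarith [sq_nonneg ε]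
  rw [mul_right_comm]
  exact mul_le_mul_left e4 _

lemma even_bound {d : ℕ} 
    (g h : EuclideanSpace ℝ (Fin d) → ℂ) (hg : ContDiff ℝ 1 g) (hh : ContDiff ℝ 1 h) :
    ∫⁻ v, ‖fderiv ℝ (fun v => (starRingEnd ℂ) (h v) * g v) v‖ₑ ≤
        n2 (fun v => ‖fderiv ℝ h v‖ₑ) * n2 (fun v => ‖g v‖ₑ) +
          n2 (fun v => ‖fderiv ℝ g v‖ₑ) * n2 (fun v => ‖h v‖ₑ) := by
  have mg : Measurable (fun v => ‖g v‖ₑ) := hg.continuous.enorm.measurable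
  have mh : Measurable (fun v => ‖h v‖ₑ) := hh.continuous.enorm.measurable
  have mdg : Measurable (fun v => ‖fderiv ℝ g v‖ₑ) :=
    (hg.continuous_fderiv (by norm_num)).enorm.measurable
  have mdh : Measurable (fun v => ‖fderiv ℝ h v‖ₑ) :=
    (hh.continuous_fderiv (by norm_num)).enorm.measurable
  refine le_trans ?_ (add_le_add (holder2 _ _ mdh mg) (holder2 _ _ mdg mh))
  have mN' : Measurable (fun v => ‖fderiv ℝ h v‖ₑ * ‖g v‖ₑ) := Measurable.mul mdh mg
  rw [← lintegral_add_left mN']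
  refine lintegral_mono fun v => ?_
  have dh := (hh.differentiable (by norm_num) v).hasFDerivAt
  have dg := (hg.differentiable (by norm_num) v).hasFDerivAt
  have dhc : HasFDerivAt (fun v => (starRingEnd ℂ) (h v))
      ((Complex.conjCLE : ℂ →L[ℝ] ℂ).comp (fderiv ℝ h v)) v :=
    Complex.conjCLE.hasFDerivAt.comp v dh
  have := (dhc.mul dg).fderiv
  have h5 : ‖fderiv ℝ (fun v => (starRingEnd ℂ) (h v) * g v) v‖ ≤
      ‖fderiv ℝ h v‖ * ‖g v‖ + ‖fderiv ℝ g v‖ * ‖h v‖ := by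
    apply ContinuousLinearMap.opNorm_le_bound _ (by positivity)
    intro x
    have hx : fderiv ℝ (fun v => (starRingEnd ℂ) (h v) * g v) v x =
      (starRingEnd ℂ) (h v) * fderiv ℝ g v x + g v * (starRingEnd ℂ) (fderiv ℝ h v x) := by
      erw [this]
      simp
    rw [hx]
    refine (norm_add_le _ _).trans ?_
    rw [norm_mul, norm_mul, RCLike.norm_conj, RCLike.norm_conj]
    have := (fderiv ℝ g v).le_opNorm x
    have := (fderiv ℝ h v).le_opNorm x
    calc _ ≤ ‖h v‖ * (‖fderiv ℝ g v‖ * ‖x‖) + ‖g v‖ * (‖fderiv ℝ h v‖ * ‖x‖) := by gcongr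
      _ = _ := by ring
  simp only [← ofReal_norm]
  rw [← ENNReal.ofReal_mul (by positivity), ← ENNReal.ofReal_mul (by positivity),
    ← ENNReal.ofReal_add (by positivity) (by positivity)]
  exact ENNReal.ofReal_le_ofReal h5

lemma of2 (r : ℝ) : ENNReal.ofReal (2 / r) = 2 * ENNReal.ofReal (1 / r) := by
  rw [← ENNReal.ofReal_ofNat 2, ← ENNReal.ofReal_mul (by norm_num)]; congr 1; ring

lemma of4 (r : ℝ) : ENNReal.ofReal (4 / r) = 4 * ENNReal.ofReal (1 / r) := by
  rw [← ENNReal.ofReal_ofNat 4, ← ENNReal.ofReal_mul (by norm_num)]; congr 1; ring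

lemma total {d : ℕ} (k : EuclideanSpace ℝ (Fin d)) (hk : k ≠ 0) (ε : ℝ) (hε : 0 < ε)
    (g h : EuclideanSpace ℝ (Fin d) → ℂ) (hg : ContDiff ℝ 1 g) (hh : ContDiff ℝ 1 h)
    (hgc : HasCompactSupport g) :
    ‖∫ v, (starRingEnd ℂ) (h v) * g v / ((ε : ℂ) + Complex.I * ((⟪k, v⟫ : ℝ) : ℂ))‖ₑ ≤
      ENNReal.ofReal (4 / ‖k‖) *
        (n2 (fun v => ‖fderiv ℝ h v‖ₑ) * n2 (fun v => ‖g v‖ₑ) +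
          n2 (fun v => ‖fderiv ℝ g v‖ₑ) * n2 (fun v => ‖h v‖ₑ)) := by
  have hk' : 0 < ‖k‖ := norm_pos_iff.mpr hk
  let F : EuclideanSpace ℝ (Fin d) → ℂ := fun v => (starRingEnd ℂ) (h v) * g v
  have hF : ContDiff ℝ 1 F := (Complex.conjCLE.contDiff.comp hh).mul hg
  have hFc : HasCompactSupport F := hgc.mul_left
  have hpos : ∀ v : EuclideanSpace ℝ (Fin d), 0 < ε ^ 2 + ⟪k, v⟫ ^ 2 := fun v => by positivity
  have hev := (even_part k hk ε hε F hF hFc).trans (mul_le_mul_right (even_bound g h hg hh) _)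
  have hodd := (odd_part k hk ε hε F hF.continuous hFc).trans (odd_bound k hk ε hε g h hg hh)
  have i1 : Integrable (fun v => F v * ((ε / (ε ^ 2 + ⟪k, v⟫ ^ 2) : ℝ) : ℂ)) volume := by
    refine Continuous.integrable_of_hasCompactSupport ?_ hFc.mul_right
    apply hF.continuous.mul
    apply Complex.continuous_ofReal.comp
    apply Continuous.div (by fun_prop) (by fun_prop)
    exact fun v => (hpos v).ne'
  have i2 : Integrable (fun v => F v * ((⟪k, v⟫ / (ε ^ 2 + ⟪k, v⟫ ^ 2) : ℝ) : ℂ)) volume := by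
    refine Continuous.integrable_of_hasCompactSupport ?_ hFc.mul_right
    apply hF.continuous.mul
    apply Complex.continuous_ofReal.comp
    apply Continuous.div (by fun_prop) (by fun_prop)
    exact fun v => (hpos v).ne'
  have hsplit : ∫ v, (starRingEnd ℂ) (h v) * g v / ((ε : ℂ) + Complex.I * ((⟪k, v⟫ : ℝ) : ℂ)) =
      (∫ v, F v * ((ε / (ε ^ 2 + ⟪k, v⟫ ^ 2) : ℝ) : ℂ)) -
        Complex.I * ∫ v, F v * ((⟪k, v⟫ / (ε ^ 2 + ⟪k, v⟫ ^ 2) : ℝ) : ℂ) := by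
    rw [← integral_const_mul, ← integral_sub i1 (i2.const_mul _)]
    refine integral_congr_ae (Filter.Eventually.of_forall fun v => ?_)
    have n1 : (ε : ℂ) + Complex.I * ((⟪k, v⟫ : ℝ) : ℂ) ≠ 0 := by
      intro h0
      have := congrArg Complex.re h0
      simp at this
      exact hε.ne' this
    have n2 : (ε : ℂ) ^ 2 + ((⟪k, v⟫ : ℝ) : ℂ) ^ 2 ≠ 0 := by
      exact_mod_cast (hpos v).ne'
    simp only [F]
    push_cast
    field_simp
    linear_combination ((starRingEnd ℂ) (h v) * g v * ((⟪k, v⟫ : ℝ) : ℂ) ^ 2) * Complex.I_sq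
  rw [hsplit]
  refine enorm_sub_le.trans ?_
  rw [enorm_mul]
  have hI : ‖Complex.I‖ₑ = 1 := by rw [← ofReal_norm]; simp
  rw [hI, one_mul]
  set J1 := ‖∫ v, F v * ((ε / (ε ^ 2 + ⟪k, v⟫ ^ 2) : ℝ) : ℂ)‖ₑ
  set J2 := ‖∫ v, F v * ((⟪k, v⟫ / (ε ^ 2 + ⟪k, v⟫ ^ 2) : ℝ) : ℂ)‖ₑ
  set P := n2 (fun v => ‖fderiv ℝ h v‖ₑ) * n2 (fun v => ‖g v‖ₑ) +
          n2 (fun v => ‖fderiv ℝ g v‖ₑ) * n2 (fun v => ‖h v‖ₑ)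
  have c2 : ENNReal.ofReal (2 / ‖k‖) = 2 * ENNReal.ofReal (1 / ‖k‖) := of2 _
  have c4 : ENNReal.ofReal (4 / ‖k‖) = 4 * ENNReal.ofReal (1 / ‖k‖) := of4 _
  rw [← mul_add] at hodd
  have hodd' : 2 * J2 ≤ 2 * (2 * ENNReal.ofReal (1 / ‖k‖) * P) := by
    refine hodd.trans (le_of_eq ?_)
    ring
  have hJ2 : J2 ≤ 2 * ENNReal.ofReal (1 / ‖k‖) * P :=
    (ENNReal.mul_le_mul_iff_right (by norm_num) (by norm_num)).1 hodd'
  rw [c2] at hev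
  rw [c4]
  refine (add_le_add hev hJ2).trans (le_of_eq ?_)
  ring

end Resolv

/-- Bilinear estimate for the resolvent `(ε + i k·v)⁻¹` of free transport, uniform in
`ε > 0`: `|∫ conj(h) g / (ε + i k·v)| ≤ (C/|k|) ((‖h‖₂ + ‖∇h‖₂)‖g‖₂ + ‖h‖₂‖∇g‖₂)`. -/
theorem stmt3 (d : ℕ) (hd : 1 ≤ d) :
    ∃ C : ℝ, 0 < C ∧
      ∀ g h : EuclideanSpace ℝ (Fin d) → ℂ,
        ContDiff ℝ (⊤ : ℕ∞) g → HasCompactSupport g →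
        ContDiff ℝ (⊤ : ℕ∞) h → HasCompactSupport h →
        ∀ k : EuclideanSpace ℝ (Fin d), k ≠ 0 →
        ∀ ε : ℝ, 0 < ε →
        ‖∫ v, (starRingEnd ℂ) (h v) * g v / ((ε : ℂ) + Complex.I * ((⟪k, v⟫ : ℝ) : ℂ))‖
          ≤ (C / ‖k‖) *
            (((eLpNorm h 2 volume).toReal + (eLpNorm (fderiv ℝ h) 2 volume).toReal) *
                (eLpNorm g 2 volume).toReal
              + (eLpNorm h 2 volume).toReal * (eLpNorm (fderiv ℝ g) 2 volume).toReal) := by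
  refine ⟨4, by norm_num, ?_⟩
  intro g h hg hgc hh hhc k hk ε hε
  have hg1 : ContDiff ℝ 1 g := hg.of_le (by exact_mod_cast le_top)
  have hh1 : ContDiff ℝ 1 h := hh.of_le (by exact_mod_cast le_top)
  have key := Resolv.total k hk ε hε g h hg1 hh1 hgc
  simp only [← Resolv.eLp2] at key
  have tg : eLpNorm g 2 volume ≠ ∞ := (hg1.continuous.memLp_of_hasCompactSupport hgc).2.ne
  have th : eLpNorm h 2 volume ≠ ∞ := (hh1.continuous.memLp_of_hasCompactSupport hhc).2.ne
  have tdg : eLpNorm (fderiv ℝ g) 2 volume ≠ ∞ :=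
    ((hg1.continuous_fderiv (by norm_num)).memLp_of_hasCompactSupport (hgc.fderiv ℝ)).2.ne
  have tdh : eLpNorm (fderiv ℝ h) 2 volume ≠ ∞ :=
    ((hh1.continuous_fderiv (by norm_num)).memLp_of_hasCompactSupport (hhc.fderiv ℝ)).2.ne
  have t1 := ENNReal.mul_ne_top tdh tg
  have t2 := ENNReal.mul_ne_top tdg th
  have key2 := ENNReal.toReal_mono
    (ENNReal.mul_ne_top ENNReal.ofReal_ne_top (ENNReal.add_ne_top.2 ⟨t1, t2⟩)) key
  rw [toReal_enorm, ENNReal.toReal_mul, ENNReal.toReal_add t1 t2, ENNReal.toReal_mul,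
    ENNReal.toReal_mul, ENNReal.toReal_ofReal (by positivity)] at key2
  refine key2.trans ?_
  gcongr ?_ * ?_
  have : 0 ≤ (eLpNorm h 2 volume).toReal * (eLpNorm g 2 volume).toReal := by positivity
  linarith
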